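/- Fix q > 0, let Σ_n be a random permutation of [n] from the Mallows(q) distribution, let m ≥ 2 with n ≥ 2m, and let η_m = m(m−1)⋯21 be the decreasing pattern. Let W be the number of blocks of m consecutive indices α = {i, …, i+m−1} ⊆ [n] on which the values of Σ_n are decreasing, and let Y be a Poisson random variable with mean equal to E W. Then d_TV( L(W), L(Y) ) ≤ 2·(b_1 + b_2), where b_1 = n_1·q^{2·C(m,2)}/I_m(q)², b_2 = n_2·Σ_{s=1}^{m−1} q^{C(2m−s,2)}/I_{2m−s}(q), n_1 = 2mn − 3m² + m, and n_2 = 3m − 3m² − 2n + 2mn. -/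

import Mathlib

open scoped Classical
open Filter

noncomputable section

/-- `τ` occurs in `σ` at the strictly increasing positions given by `f`:
`f` is strictly increasing and `σ ∘ f` is order-isomorphic to `τ`. -/
def OccursAt {m n : ℕ} (τ : Equiv.Perm (Fin m)) (σ : Equiv.Perm (Fin n))
    (f : Fin m → Fin n) : Prop :=
  StrictMono f ∧ ∀ k l, σ (f k) < σ (f l) ↔ τ k < τ l

/-- `τ` occurs in `σ` at the set of positions `α` (listed in increasing order). -/
def OccursOn {m n : ℕ} (τ : Equiv.Perm (Fin m)) (σ : Equiv.Perm (Fin n))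
    (α : Finset (Fin n)) : Prop :=
  ∃ f : Fin m → Fin n, StrictMono f ∧ Finset.univ.image f = α ∧
    ∀ k l, σ (f k) < σ (f l) ↔ τ k < τ l

/-- `τ` occurs in `σ` at the consecutive (0-indexed) positions `i, i+1, …, i+m-1`. -/
def OccursConsec {m n : ℕ} (τ : Equiv.Perm (Fin m)) (σ : Equiv.Perm (Fin n)) (i : ℕ) : Prop :=
  ∃ h : i + m ≤ n, ∀ k l : Fin m,
    σ ⟨i + k, by have := k.isLt; omega⟩ < σ ⟨i + l, by have := l.isLt; omega⟩ ↔ τ k < τ l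

/-- The overlap count `L_s(τ)`: the number of permutations of `[2m-s]` containing
two occurrences of `τ` at index sets sharing exactly `s` elements. -/
def overlapCount {m : ℕ} (τ : Equiv.Perm (Fin m)) (s : ℕ) : ℕ :=
  Set.ncard {ρ : Equiv.Perm (Fin (2 * m - s)) |
    ∃ α β : Finset (Fin (2 * m - s)), α.card = m ∧ β.card = m ∧ (α ∩ β).card = s ∧
      OccursOn τ ρ α ∧ OccursOn τ ρ β}

/-- The sequential overlap count `L̄_s(τ)`: the number of permutations of `[2m-s]` with
occurrences of `τ` at positions `(1,…,m)` and `(m-s+1,…,2m-s)`. -/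
def seqOverlapCount {m : ℕ} (τ : Equiv.Perm (Fin m)) (s : ℕ) : ℕ :=
  Set.ncard {ρ : Equiv.Perm (Fin (2 * m - s)) |
    OccursConsec τ ρ 0 ∧ OccursConsec τ ρ (m - s)}

/-- The number of inversions of a permutation. -/
def invCount {n : ℕ} (σ : Equiv.Perm (Fin n)) : ℕ :=
  (Finset.univ.filter fun p : Fin n × Fin n => p.1 < p.2 ∧ σ p.2 < σ p.1).card

/-- The inversion polynomial `I_n(q) = ∏_{j=1}^n (1 + q + ⋯ + q^{j-1})`. -/
def invPoly (n : ℕ) (q : ℝ) : ℝ :=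
  ∏ j ∈ Finset.range n, ∑ i ∈ Finset.range (j + 1), q ^ i

/-- Probability of the event `E` under the uniform distribution on `S_n`. -/
def unifProb {n : ℕ} (E : Set (Equiv.Perm (Fin n))) : ℝ :=
  (E.ncard : ℝ) / (n.factorial : ℝ)

/-- Probability of the event `E` under the Mallows(q) distribution on `S_n`. -/
def mallowsProb {n : ℕ} (q : ℝ) (E : Set (Equiv.Perm (Fin n))) : ℝ :=
  (∑ σ ∈ Finset.univ.filter (· ∈ E), q ^ invCount σ) / invPoly n q

/-- Expectation of `X` under the uniform distribution on `S_n`. -/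
def unifExp {n : ℕ} (X : Equiv.Perm (Fin n) → ℝ) : ℝ :=
  (∑ σ : Equiv.Perm (Fin n), X σ) / (n.factorial : ℝ)

/-- Expectation of `X` under the Mallows(q) distribution on `S_n`. -/
def mallowsExp {n : ℕ} (q : ℝ) (X : Equiv.Perm (Fin n) → ℝ) : ℝ :=
  (∑ σ : Equiv.Perm (Fin n), X σ * q ^ invCount σ) / invPoly n q

/-- The Poisson(lam) probability mass function. -/
def poissonPMF (lam : ℝ) (k : ℕ) : ℝ :=
  Real.exp (-lam) * lam ^ k / (k.factorial : ℝ)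

/-- Total variation distance between the law of the ℕ-valued statistic `W` of a uniformly
random permutation of `[n]` and the Poisson(lam) distribution. -/
def dTVNatUnif {n : ℕ} (W : Equiv.Perm (Fin n) → ℕ) (lam : ℝ) : ℝ :=
  (1 / 2) * ∑' k : ℕ, |unifProb {σ | W σ = k} - poissonPMF lam k|

/-- Total variation distance between the law of the ℕ-valued statistic `W` of a Mallows(q)
random permutation of `[n]` and the Poisson(lam) distribution. -/
def dTVNatMallows {n : ℕ} (q : ℝ) (W : Equiv.Perm (Fin n) → ℕ) (lam : ℝ) : ℝ :=
  (1 / 2) * ∑' k : ℕ, |mallowsProb q {σ | W σ = k} - poissonPMF lam k|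

/-- Total variation distance between the joint law of the indicator family
`(X_α)_{α ∈ I}` of a uniformly random permutation of `[n]` and the joint law of
independent Bernoulli random variables with marginals `p`. -/
def dTVFamUnif {n : ℕ} {I : Type*} [Fintype I] [DecidableEq I]
    (X : Equiv.Perm (Fin n) → I → Prop) (p : I → ℝ) : ℝ :=
  (1 / 2) * ∑ x : I → Bool,
    |unifProb {σ | ∀ α, X σ α ↔ x α = true} - ∏ α, (if x α then p α else 1 - p α)|

/-- Total variation distance between the joint law of the indicator family
`(X_α)_{α ∈ I}` of a Mallows(q) random permutation of `[n]` and the joint law of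
independent Bernoulli random variables with marginals `p`. -/
def dTVFamMallows {n : ℕ} (q : ℝ) {I : Type*} [Fintype I] [DecidableEq I]
    (X : Equiv.Perm (Fin n) → I → Prop) (p : I → ℝ) : ℝ :=
  (1 / 2) * ∑ x : I → Bool,
    |mallowsProb q {σ | ∀ α, X σ α ↔ x α = true} - ∏ α, (if x α then p α else 1 - p α)|

/-! Chen–Stein method with local dependence. For `0 ≤ h ≤ 1` the Stein equation
`lam * f (j + 1) - j * f j = h j - E h(Y)`, `Y ∼ Poisson(lam)`, has a solution whose increments are
at most `(1 - exp (-lam)) / lam ≤ 1` in absolute value. Evaluating it at the number `W` of those of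
some given events that occur amounts to comparing, for each event, `W` with the number of
occurrences outside a neighbourhood of that event. If this number is independent of the event, then
only pairs of neighbouring events contribute.

Under the Mallows distribution the neighbours of a block of positions are the blocks that meet it.
Every permutation arises in a unique way from one that is increasing on the block by rearranging the
entries there; a rearrangement `ρ` multiplies the weight by `q ^ invCount ρ` and changes nothing
outside the block. Hence the relative order on a block is itself Mallows distributed and is
independent of everything that concerns only positions outside it. Two overlapping decreasing blocks
of length `m` at distance `d` form one decreasing block of length `m + d`, and there are fewer than
`n - m + 1` pairs of blocks at a given distance. -/

open MeasureTheory
open ProbabilityTheory (IndepSet)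

section SteinEquation

variable {lam : ℝ} {h : ℕ → ℝ}

theorem poissonPMF_zero (lam : ℝ) : poissonPMF lam 0 = Real.exp (-lam) := by
  simp [poissonPMF]

theorem poissonPMF_pos (hlam : 0 < lam) (k : ℕ) : 0 < poissonPMF lam k := by
  unfold poissonPMF
  positivity

theorem hasSum_poissonPMF (hlam : 0 < lam) : HasSum (poissonPMF lam) 1 :=
  ProbabilityTheory.hasSum_one_poissonMeasure ⟨lam, hlam.le⟩

theorem succ_mul_poissonPMF_succ (lam : ℝ) (k : ℕ) :
    ((k : ℝ) + 1) * poissonPMF lam (k + 1) = lam * poissonPMF lam k := by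
  simp only [poissonPMF, Nat.factorial_succ, Nat.cast_mul, Nat.cast_succ]
  field_simp
  ring

/-- The part of the mean of `h` under Poisson(`lam`) carried by `{0, …, j - 1}`. -/
def poissonHead (lam : ℝ) (h : ℕ → ℝ) (j : ℕ) : ℝ :=
  ∑ i ∈ Finset.range j, h i * poissonPMF lam i

/-- The part of the mean of `h` under Poisson(`lam`) carried by `{j, j + 1, …}`; for `j = 0` it is
the mean itself. -/
def poissonTail (lam : ℝ) (h : ℕ → ℝ) (j : ℕ) : ℝ :=
  ∑' i, h (i + j) * poissonPMF lam (i + j)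

theorem summable_mul_poissonPMF (hlam : 0 < lam) (hh : ∀ k, h k ∈ Set.Icc 0 1) :
    Summable fun k => h k * poissonPMF lam k :=
  (hasSum_poissonPMF hlam).summable.of_nonneg_of_le
    (fun k => mul_nonneg (hh k).1 (poissonPMF_pos hlam k).le)
    (fun k => mul_le_of_le_one_left (poissonPMF_pos hlam k).le (hh k).2)

theorem one_mem_Icc (k : ℕ) : (1 : ℕ → ℝ) k ∈ Set.Icc 0 1 := by simp

theorem poissonHead_succ (lam : ℝ) (h : ℕ → ℝ) (j : ℕ) :
    poissonHead lam h (j + 1) = poissonHead lam h j + h j * poissonPMF lam j :=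
  Finset.sum_range_succ _ j

theorem poissonHead_nonneg (hlam : 0 < lam) (hh : ∀ k, 0 ≤ h k) (j : ℕ) :
    0 ≤ poissonHead lam h j :=
  Finset.sum_nonneg fun i _ => mul_nonneg (hh i) (poissonPMF_pos hlam i).le

theorem poissonTail_nonneg (hlam : 0 < lam) (hh : ∀ k, 0 ≤ h k) (j : ℕ) :
    0 ≤ poissonTail lam h j :=
  tsum_nonneg fun i => mul_nonneg (hh (i + j)) (poissonPMF_pos hlam (i + j)).le

theorem poissonHead_add_poissonTail (hlam : 0 < lam) (hh : ∀ k, h k ∈ Set.Icc 0 1) (j : ℕ) :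
    poissonHead lam h j + poissonTail lam h j = poissonTail lam h 0 :=
  (summable_mul_poissonPMF hlam hh).sum_add_tsum_nat_add j

theorem poissonHead_one_add_poissonTail_one (hlam : 0 < lam) (j : ℕ) :
    poissonHead lam 1 j + poissonTail lam 1 j = 1 := by
  rw [poissonHead_add_poissonTail hlam one_mem_Icc]
  simpa [poissonTail] using (hasSum_poissonPMF hlam).tsum_eq

theorem poissonTail_eq_add_poissonTail_succ (hlam : 0 < lam) (hh : ∀ k, h k ∈ Set.Icc 0 1)
    (j : ℕ) : poissonTail lam h j = h j * poissonPMF lam j + poissonTail lam h (j + 1) := by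
  linarith [poissonHead_succ lam h j, poissonHead_add_poissonTail hlam hh j,
    poissonHead_add_poissonTail hlam hh (j + 1)]

theorem mul_poissonHead_one_le (hlam : 0 < lam) (j : ℕ) :
    lam * poissonHead lam 1 j ≤ j * (poissonHead lam 1 (j + 1) - poissonPMF lam 0) := by
  simp only [poissonHead, Pi.one_apply, one_mul, Finset.sum_range_succ', add_sub_cancel_right,
    Finset.mul_sum]
  refine Finset.sum_le_sum fun i hi => ?_
  rw [← succ_mul_poissonPMF_succ]
  have hij : (i : ℝ) + 1 ≤ j := by exact_mod_cast Finset.mem_range.1 hi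
  gcongr
  exact (poissonPMF_pos hlam _).le

theorem mul_poissonTail_one_succ_le (hlam : 0 < lam) (j : ℕ) :
    j * poissonTail lam 1 (j + 1) ≤ lam * poissonTail lam 1 j := by
  have hsummable (i : ℕ) : Summable fun k => poissonPMF lam (k + i) :=
    (summable_nat_add_iff i).2 (hasSum_poissonPMF hlam).summable
  simp only [poissonTail, Pi.one_apply, one_mul, ← tsum_mul_left]
  refine ((hsummable (j + 1)).mul_left _).tsum_le_tsum (fun i => ?_) ((hsummable j).mul_left _)
  rw [← succ_mul_poissonPMF_succ, ← add_assoc]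
  have := (poissonPMF_pos hlam (i + j + 1)).le
  gcongr
  exact_mod_cast (by omega : j ≤ i + j + 1)

/-- The solution `f` of the Stein equation `lam * f (j + 1) - j * f j = h j - E h(Y)` for
`Y ∼ Poisson(lam)`. It is the usual `(∑ i < j, (h i - E h(Y)) P(Y = i)) / (j P(Y = j))`, rewritten
so that the contributions of the values of `h` below and above `j` appear with opposite signs.
The irrelevant value at `j = 0` is `0`, by division by zero. -/
def poissonStein (lam : ℝ) (h : ℕ → ℝ) (j : ℕ) : ℝ :=
  (poissonHead lam h j * poissonTail lam 1 j - poissonTail lam h j * poissonHead lam 1 j) /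
    (j * poissonPMF lam j)

theorem poissonStein_equation (hlam : 0 < lam) (hh : ∀ k, h k ∈ Set.Icc 0 1) (j : ℕ) :
    lam * poissonStein lam h (j + 1) - j * poissonStein lam h j = h j - poissonTail lam h 0 := by
  have hp := poissonPMF_pos hlam j
  have hcancel : j * poissonStein lam h j =
      (poissonHead lam h j * poissonTail lam 1 j - poissonTail lam h j * poissonHead lam 1 j) /
        poissonPMF lam j := by
    rcases eq_or_ne j 0 with rfl | hj
    · simp [poissonHead]
    · unfold poissonStein
      field_simp
  rw [hcancel, poissonStein, Nat.cast_succ, succ_mul_poissonPMF_succ,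
    ← poissonHead_add_poissonTail hlam hh j, poissonHead_succ, poissonHead_succ,
    poissonTail_eq_add_poissonTail_succ hlam hh j,
    poissonTail_eq_add_poissonTail_succ hlam one_mem_Icc j, Pi.one_apply]
  have htotal := poissonHead_one_add_poissonTail_one hlam (j + 1)
  rw [poissonHead_succ, Pi.one_apply] at htotal
  field_simp
  linear_combination poissonPMF lam j * h j * htotal

theorem poissonStein_one_sub (hlam : 0 < lam) (hh : ∀ k, h k ∈ Set.Icc 0 1) (j : ℕ) :
    poissonStein lam (1 - h) j = -poissonStein lam h j := by
  have hhead : poissonHead lam (1 - h) j = poissonHead lam 1 j - poissonHead lam h j := by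
    simp [poissonHead, sub_mul, Finset.sum_sub_distrib]
  have htail : poissonTail lam (1 - h) j = poissonTail lam 1 j - poissonTail lam h j := by
    simp only [poissonTail, Pi.sub_apply, sub_mul]
    exact ((summable_nat_add_iff j).2 (summable_mul_poissonPMF hlam one_mem_Icc)).tsum_sub
      ((summable_nat_add_iff j).2 (summable_mul_poissonPMF hlam hh))
  rw [poissonStein, poissonStein, hhead, htail]
  ring

/-- The magic factor of the Chen–Stein method: the bound on the increments of the solutions of the
Stein equation for Poisson(`lam`). -/
def magicFactor (lam : ℝ) : ℝ := (1 - Real.exp (-lam)) / lam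

theorem magicFactor_nonneg (hlam : 0 < lam) : 0 ≤ magicFactor lam :=
  div_nonneg (by simpa using hlam.le) hlam.le

theorem magicFactor_le_one (hlam : 0 < lam) : magicFactor lam ≤ 1 := by
  rw [magicFactor, div_le_one hlam]
  linarith [Real.add_one_le_exp (-lam)]

theorem poissonStein_succ_sub (hlam : 0 < lam) (hh : ∀ k, h k ∈ Set.Icc 0 1) {j : ℕ}
    (hj : 0 < j) :
    poissonStein lam h (j + 1) - poissonStein lam h j =
      (h j * (j * poissonTail lam 1 (j + 1) + lam * poissonHead lam 1 j) * poissonPMF lam j -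
        poissonHead lam h j * (lam * poissonTail lam 1 j - j * poissonTail lam 1 (j + 1)) -
        poissonTail lam h (j + 1) * (j * poissonHead lam 1 (j + 1) - lam * poissonHead lam 1 j)) /
        (lam * j * poissonPMF lam j) := by
  rw [poissonStein, poissonStein, Nat.cast_succ, succ_mul_poissonPMF_succ, poissonHead_succ,
    poissonHead_succ, poissonTail_eq_add_poissonTail_succ hlam hh j,
    poissonTail_eq_add_poissonTail_succ hlam one_mem_Icc j, Pi.one_apply]
  field_simp
  ring

/- In `f (j + 1) - f j` the values of `h` other than `h j` contribute nonpositively, because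
`P(Y < j) / (j P(Y = j))` increases with `j` and `P(Y ≥ j) / (j P(Y = j))` decreases. -/
theorem poissonStein_succ_sub_le (hlam : 0 < lam) (hh : ∀ k, h k ∈ Set.Icc 0 1) {j : ℕ}
    (hj : 0 < j) : poissonStein lam h (j + 1) - poissonStein lam h j ≤ magicFactor lam := by
  have hp := poissonPMF_pos hlam j
  have hp₀ := poissonPMF_pos hlam 0
  have hhead := mul_poissonHead_one_le hlam j
  have htail := mul_poissonTail_one_succ_le hlam j
  have hbelow : 0 ≤ poissonHead lam h j *
      (lam * poissonTail lam 1 j - j * poissonTail lam 1 (j + 1)) :=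
    mul_nonneg (poissonHead_nonneg hlam (fun k => (hh k).1) j) (sub_nonneg.2 htail)
  have habove : 0 ≤ poissonTail lam h (j + 1) *
      (j * poissonHead lam 1 (j + 1) - lam * poissonHead lam 1 j) := by
    refine mul_nonneg (poissonTail_nonneg hlam (fun k => (hh k).1) (j + 1)) (sub_nonneg.2 ?_)
    exact hhead.trans (by gcongr; linarith)
  have hT : 0 ≤ poissonTail lam 1 (j + 1) :=
    poissonTail_nonneg hlam (fun k => (one_mem_Icc k).1) (j + 1)
  have hS : 0 ≤ poissonHead lam 1 j := poissonHead_nonneg hlam (fun k => (one_mem_Icc k).1) j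
  calc poissonStein lam h (j + 1) - poissonStein lam h j
      ≤ h j * (j * poissonTail lam 1 (j + 1) + lam * poissonHead lam 1 j) * poissonPMF lam j /
          (lam * j * poissonPMF lam j) := by
        rw [poissonStein_succ_sub hlam hh hj]
        gcongr
        linarith
    _ ≤ 1 * (j * poissonTail lam 1 (j + 1) +
          j * (poissonHead lam 1 (j + 1) - poissonPMF lam 0)) * poissonPMF lam j /
          (lam * j * poissonPMF lam j) := by
        gcongr
        exact (hh j).2
    _ = magicFactor lam := by
        rw [magicFactor, ← poissonPMF_zero]
        field_simp
        linear_combination poissonHead_one_add_poissonTail_one hlam (j + 1)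

theorem abs_poissonStein_succ_sub_le (hlam : 0 < lam) (hh : ∀ k, h k ∈ Set.Icc 0 1) {j : ℕ}
    (hj : 0 < j) : |poissonStein lam h (j + 1) - poissonStein lam h j| ≤ magicFactor lam := by
  have hh' (k : ℕ) : (1 - h) k ∈ Set.Icc 0 1 := by
    obtain ⟨h₀, h₁⟩ := hh k
    exact ⟨sub_nonneg.2 h₁, sub_le_self _ h₀⟩
  have hupper := poissonStein_succ_sub_le hlam hh hj
  have hlower := poissonStein_succ_sub_le hlam hh' hj
  rw [poissonStein_one_sub hlam hh, poissonStein_one_sub hlam hh] at hlower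
  exact abs_le.2 ⟨by linarith, hupper⟩

end SteinEquation

section TotalVariation

theorem hasSum_measureReal_singleton_smul {X E : Type*} [MeasurableSpace X] [Countable X]
    [MeasurableSingletonClass X] [NormedAddCommGroup E] [NormedSpace ℝ E] [CompleteSpace E]
    {μ : Measure X} {f : X → E} (hf : Integrable f μ) :
    HasSum (fun x => μ.real {x} • f x) (∫ x, f x ∂μ) := by
  have hsum : HasSum (fun x => ∫ y, f y ∂(μ {x} • Measure.dirac x)) (∫ y, f y ∂μ) := by
    rw [← Measure.sum_smul_dirac μ] at hf
    simpa only [Measure.sum_smul_dirac] using hasSum_integral_measure hf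
  simpa only [integral_smul_measure, integral_dirac, measureReal_def] using hsum

theorem half_tsum_abs_sub_eq {ι : Type*} {a b : ι → ℝ} {s : ℝ} (ha : HasSum a s)
    (hb : HasSum b s) :
    (1 / 2) * ∑' k, |a k - b k| = ∑' k, {k | b k < a k}.indicator (a - b) k := by
  have hzero : HasSum (fun k => a k - b k) 0 := by simpa using ha.sub hb
  have habs (k : ι) : |a k - b k| = 2 * {k | b k < a k}.indicator (a - b) k - (a k - b k) := by
    rcases lt_or_ge (b k) (a k) with hk | hk
    · simp only [Set.indicator, Set.mem_ofPred_eq, if_pos hk, abs_of_pos (sub_pos.2 hk),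
        Pi.sub_apply]
      ring
    · simp only [Set.indicator, Set.mem_ofPred_eq, if_neg hk.not_gt,
        abs_of_nonpos (sub_nonpos.2 hk)]
      ring
  have hpos : Summable ({k | b k < a k}.indicator (a - b)) :=
    (ha.summable.sub hb.summable).indicator _
  simp_rw [habs]
  rw [(hpos.mul_left 2).tsum_sub hzero.summable, hzero.tsum_eq, tsum_mul_left]
  ring

theorem half_tsum_abs_sub_poissonPMF_le {lam b : ℝ} (hlam : 0 < lam) {ν : Measure ℕ}
    [IsProbabilityMeasure ν]
    (hb : ∀ f : ℕ → ℝ, (∀ j, |f (j + 2) - f (j + 1)| ≤ magicFactor lam) →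
      ∫ k, lam * f (k + 1) - k * f k ∂ν ≤ b) :
    (1 / 2) * ∑' k, |ν.real {k} - poissonPMF lam k| ≤ b := by
  set S : Set ℕ := {k | poissonPMF lam k < ν.real {k}}
  have hh (k : ℕ) : S.indicator (1 : ℕ → ℝ) k ∈ Set.Icc 0 1 := by
    by_cases hk : k ∈ S <;> simp [hk]
  have hint : Integrable (S.indicator (1 : ℕ → ℝ)) ν :=
    Integrable.of_bound (by fun_prop) 1 (.of_forall fun k => by
      rw [Real.norm_of_nonneg (hh k).1]; exact (hh k).2)
  have hν : HasSum (fun k => ν.real {k}) 1 := by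
    simpa using hasSum_measureReal_singleton_smul (integrable_const (μ := ν) (1 : ℝ))
  calc (1 / 2) * ∑' k, |ν.real {k} - poissonPMF lam k|
      = ∑' k, (ν.real {k} * S.indicator 1 k - S.indicator 1 k * poissonPMF lam k) := by
        rw [half_tsum_abs_sub_eq hν (hasSum_poissonPMF hlam)]
        refine tsum_congr fun k => ?_
        by_cases hk : k ∈ S <;> simp [S, hk]
    _ = (∫ k, S.indicator 1 k ∂ν) - poissonTail lam (S.indicator 1) 0 :=
        ((hasSum_measureReal_singleton_smul hint).sub
          (summable_mul_poissonPMF hlam hh).hasSum).tsum_eq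
    _ = ∫ k, lam * poissonStein lam (S.indicator 1) (k + 1) -
          k * poissonStein lam (S.indicator 1) k ∂ν := by
        simp_rw [poissonStein_equation hlam hh]
        rw [integral_sub hint (integrable_const _), integral_const, probReal_univ, one_smul]
    _ ≤ b := hb _ fun j => abs_poissonStein_succ_sub_le hlam hh j.succ_pos

end TotalVariation

section ChenStein

variable {Ω ι : Type*} {A : ι → Set Ω} {I J B : Finset ι} {i : ι} {f : ℕ → ℝ} {c : ℝ}

/-- The number of the events `A j`, `j ∈ J`, that occur. -/
def eventCount (A : ι → Set Ω) (J : Finset ι) (ω : Ω) : ℕ := ∑ j ∈ J, (A j).indicator 1 ω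

theorem eventCount_eq_card_filter (A : ι → Set Ω) (J : Finset ι) (ω : Ω) :
    eventCount A J ω = (J.filter fun j => ω ∈ A j).card := by
  simp [eventCount, Set.indicator_apply]

theorem eventCount_le_card (A : ι → Set Ω) (J : Finset ι) (ω : Ω) : eventCount A J ω ≤ J.card := by
  rw [eventCount_eq_card_filter]
  exact Finset.card_filter_le J _

theorem eventCount_sdiff_add [DecidableEq ι] (hBI : B ⊆ I) (ω : Ω) :
    eventCount A (I \ B) ω + eventCount A B ω = eventCount A I ω :=
  Finset.sum_sdiff hBI

theorem eventCount_erase_add_one [DecidableEq ι] (hi : i ∈ B) {ω : Ω} (hω : ω ∈ A i) :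
    eventCount A (B.erase i) ω + 1 = eventCount A B ω := by
  simpa [eventCount, hω] using Finset.sum_erase_add B (fun j => (A j).indicator (1 : Ω → ℕ) ω) hi

variable [MeasurableSpace Ω] {μ : Measure Ω}

theorem measurable_eventCount (hA : ∀ i, MeasurableSet (A i)) (J : Finset ι) :
    Measurable (eventCount A J) :=
  Finset.measurable_fun_sum J fun i _ => measurable_one.indicator (hA i)

theorem integrable_comp_eventCount [IsFiniteMeasure μ] (hA : ∀ i, MeasurableSet (A i))
    (J : Finset ι) (f : ℕ → ℝ) : Integrable (fun ω => f (eventCount A J ω)) μ := by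
  refine Integrable.of_bound
    ((measurable_from_top (f := f)).comp (measurable_eventCount hA J)).aestronglyMeasurable
    (∑ k ∈ Finset.range (J.card + 1), ‖f k‖) (.of_forall fun ω => ?_)
  exact Finset.single_le_sum (f := fun k => ‖f k‖) (fun k _ => norm_nonneg _)
    (Finset.mem_range_succ_iff.2 (eventCount_le_card A J ω))

theorem integral_eventCount [IsFiniteMeasure μ] (hA : ∀ i, MeasurableSet (A i)) (J : Finset ι) :
    ∫ ω, (eventCount A J ω : ℝ) ∂μ = ∑ j ∈ J, μ.real (A j) := by
  have hcast (ω : Ω) : (eventCount A J ω : ℝ) = ∑ j ∈ J, (A j).indicator 1 ω := by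
    simp [eventCount, Set.indicator_apply]
  simp_rw [hcast]
  rw [integral_finsetSum]
  · exact Finset.sum_congr rfl fun j _ => integral_indicator_one (hA j)
  · exact fun j _ => (integrable_const 1).indicator (hA j)

theorem integral_stein_operator_eq_sum [IsFiniteMeasure μ] (hA : ∀ i, MeasurableSet (A i))
    (I : Finset ι) (f : ℕ → ℝ) :
    ∫ ω, (∑ i ∈ I, μ.real (A i)) * f (eventCount A I ω + 1) -
        eventCount A I ω * f (eventCount A I ω) ∂μ =
      ∑ i ∈ I, (μ.real (A i) * ∫ ω, f (eventCount A I ω + 1) ∂μ -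
        ∫ ω in A i, f (eventCount A I ω) ∂μ) := by
  have hint := integrable_comp_eventCount (μ := μ) hA I
  have hsize (ω : Ω) : eventCount A I ω * f (eventCount A I ω) =
      ∑ i ∈ I, (A i).indicator (fun ω => f (eventCount A I ω)) ω := by
    simp only [eventCount_eq_card_filter, Set.indicator_apply, ← Finset.sum_filter,
      Finset.sum_const, nsmul_eq_mul]
  have hsum : ∫ ω, eventCount A I ω * f (eventCount A I ω) ∂μ =
      ∑ i ∈ I, ∫ ω in A i, f (eventCount A I ω) ∂μ := by
    simp_rw [hsize]
    rw [integral_finsetSum _ fun i _ => (hint f).indicator (hA i)]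
    exact Finset.sum_congr rfl fun i _ => integral_indicator (hA i)
  rw [integral_sub ((hint fun k => f (k + 1)).const_mul _) (hint fun k => k * f k),
    integral_const_mul, hsum, Finset.sum_sub_distrib, Finset.sum_mul]

theorem setIntegral_comp_of_indepSet {s : Set Ω} {V : Ω → ℕ}
    (hV : Measurable V) (hindep : ∀ k, IndepSet s (V ⁻¹' {k}) μ) (g : ℕ → ℝ) :
    ∫ ω in s, g (V ω) ∂μ = μ.real s * ∫ ω, g (V ω) ∂μ := by
  have hmap : (μ.restrict s).map V = μ s • μ.map V := by
    refine Measure.ext_of_singleton fun k => ?_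
    have hk := hV (measurableSet_singleton k)
    rw [Measure.smul_apply, Measure.map_apply hV (measurableSet_singleton k),
      Measure.map_apply hV (measurableSet_singleton k), Measure.restrict_apply hk, Set.inter_comm,
      (hindep k).measure_inter_eq_mul, smul_eq_mul]
  have hg (ν : Measure Ω) : ∫ ω, g (V ω) ∂ν = ∫ k, g k ∂(ν.map V) :=
    (integral_map hV.aemeasurable measurable_from_top.aestronglyMeasurable).symm
  rw [hg, hg, hmap, integral_smul_measure, measureReal_def, smul_eq_mul]

theorem abs_sub_le_mul_of_abs_succ_sub_le (hf : ∀ j, |f (j + 2) - f (j + 1)| ≤ c) (b d : ℕ) :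
    |f (b + d + 1) - f (b + 1)| ≤ c * d := by
  induction d with
  | zero => simp
  | succ d ih =>
    calc |f (b + (d + 1) + 1) - f (b + 1)|
        ≤ |f (b + d + 2) - f (b + d + 1)| + |f (b + d + 1) - f (b + 1)| := abs_sub_le _ _ _
      _ ≤ c + c * d := add_le_add (hf _) ih
      _ = c * ↑(d + 1) := by push_cast; ring

variable [DecidableEq ι]

theorem integral_sub_le_mul_sum [IsFiniteMeasure μ] (hA : ∀ i, MeasurableSet (A i))
    (hf : ∀ j, |f (j + 2) - f (j + 1)| ≤ c) (hBI : B ⊆ I) :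
    ∫ ω, f (eventCount A I ω + 1) ∂μ - ∫ ω, f (eventCount A (I \ B) ω + 1) ∂μ ≤
      c * ∑ j ∈ B, μ.real (A j) := by
  have hint (J : Finset ι) := integrable_comp_eventCount (μ := μ) hA J
  rw [← integral_eventCount hA, ← integral_const_mul,
    ← integral_sub (hint I fun k => f (k + 1)) (hint (I \ B) fun k => f (k + 1))]
  refine integral_mono ((hint I fun k => f (k + 1)).sub (hint (I \ B) fun k => f (k + 1)))
    ((hint B Nat.cast).const_mul c) fun ω => ?_
  rw [← eventCount_sdiff_add hBI ω]
  exact (le_abs_self _).trans (abs_sub_le_mul_of_abs_succ_sub_le hf _ _)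

/- On `A i` the events of `B` other than `A i` are one fewer than all events of `B`. -/
theorem setIntegral_sub_le_mul_sum [IsFiniteMeasure μ] (hA : ∀ i, MeasurableSet (A i))
    (hf : ∀ j, |f (j + 2) - f (j + 1)| ≤ c) (hBI : B ⊆ I) (hi : i ∈ B) :
    ∫ ω in A i, f (eventCount A (I \ B) ω + 1) ∂μ - ∫ ω in A i, f (eventCount A I ω) ∂μ ≤
      c * ∑ j ∈ B.erase i, μ.real (A i ∩ A j) := by
  have hint (J : Finset ι) := integrable_comp_eventCount (μ := μ.restrict (A i)) hA J
  have hsum : ∑ j ∈ B.erase i, μ.real (A i ∩ A j) =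
      ∑ j ∈ B.erase i, (μ.restrict (A i)).real (A j) :=
    Finset.sum_congr rfl fun j _ => by rw [measureReal_restrict_apply (hA j), Set.inter_comm]
  rw [hsum, ← integral_eventCount hA, ← integral_const_mul,
    ← integral_sub (hint (I \ B) fun k => f (k + 1)) (hint I f)]
  refine setIntegral_mono_on ((hint (I \ B) fun k => f (k + 1)).sub (hint I f))
    ((hint (B.erase i) Nat.cast).const_mul c) (hA i) fun ω hω => ?_
  rw [← eventCount_sdiff_add hBI ω, ← eventCount_erase_add_one hi hω, ← add_assoc]
  exact (le_abs_self _).trans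
    ((abs_sub_comm _ _).trans_le (abs_sub_le_mul_of_abs_succ_sub_le hf _ _))

theorem chenStein_term_le [IsFiniteMeasure μ] (hA : ∀ i, MeasurableSet (A i))
    (hf : ∀ j, |f (j + 2) - f (j + 1)| ≤ c) (hBI : B ⊆ I) (hi : i ∈ B)
    (hindep : ∀ k, IndepSet (A i) (eventCount A (I \ B) ⁻¹' {k}) μ) :
    μ.real (A i) * ∫ ω, f (eventCount A I ω + 1) ∂μ - ∫ ω in A i, f (eventCount A I ω) ∂μ ≤
      c * (∑ j ∈ B, μ.real (A i) * μ.real (A j) + ∑ j ∈ B.erase i, μ.real (A i ∩ A j)) := by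
  have hfactor := setIntegral_comp_of_indepSet (measurable_eventCount hA (I \ B)) hindep
    fun k => f (k + 1)
  have hglobal := mul_le_mul_of_nonneg_left (integral_sub_le_mul_sum (μ := μ) hA hf hBI)
    (measureReal_nonneg (μ := μ) (s := A i))
  have hlocal := setIntegral_sub_le_mul_sum (μ := μ) hA hf hBI hi
  rw [← Finset.mul_sum]
  linarith

theorem chenStein_local_dependence [IsProbabilityMeasure μ] (hA : ∀ i, MeasurableSet (A i))
    {B : ι → Finset ι} (hBI : ∀ i ∈ I, B i ⊆ I) (hB : ∀ i ∈ I, i ∈ B i)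
    (hindep : ∀ i ∈ I, ∀ k, IndepSet (A i) (eventCount A (I \ B i) ⁻¹' {k}) μ)
    {lam : ℝ} (hlam : 0 < lam) (hmean : lam = ∑ i ∈ I, μ.real (A i)) :
    (1 / 2) * ∑' k, |μ.real (eventCount A I ⁻¹' {k}) - poissonPMF lam k| ≤
      magicFactor lam * (∑ i ∈ I, ∑ j ∈ B i, μ.real (A i) * μ.real (A j) +
        ∑ i ∈ I, ∑ j ∈ (B i).erase i, μ.real (A i ∩ A j)) := by
  have hW := measurable_eventCount hA I
  have := Measure.isProbabilityMeasure_map (μ := μ) hW.aemeasurable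
  simp_rw [← map_measureReal_apply hW (measurableSet_singleton _)]
  refine half_tsum_abs_sub_poissonPMF_le hlam fun f hf => ?_
  rw [integral_map hW.aemeasurable measurable_from_top.aestronglyMeasurable, hmean,
    integral_stein_operator_eq_sum hA, ← hmean, ← Finset.sum_add_distrib, Finset.mul_sum]
  exact Finset.sum_le_sum fun i hi => chenStein_term_le hA hf (hBI i hi) (hB i hi) (hindep i hi)

end ChenStein

section Inversions

theorem invPoly_pos {q : ℝ} (hq : 0 < q) (n : ℕ) : 0 < invPoly n q :=
  Finset.prod_pos fun j _ => Finset.sum_pos (fun i _ => by positivity) (by simp)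

theorem invCount_eq_sum {n : ℕ} (σ : Equiv.Perm (Fin n)) :
    invCount σ = ∑ a, ∑ b, if a < b ∧ σ b < σ a then 1 else 0 := by
  rw [invCount, Finset.card_filter, Fintype.sum_prod_type]

theorem invCount_revPerm (k : ℕ) : invCount (Fin.revPerm : Equiv.Perm (Fin k)) = k.choose 2 := by
  have hrow (b : Fin k) : (∑ a : Fin k, if a < b then 1 else 0) = (b : ℕ) := by
    rw [← Finset.card_filter, Finset.filter_gt_eq_Iio, Fin.card_Iio]
  rw [invCount_eq_sum, Finset.sum_comm]
  simp only [Fin.revPerm_apply, Fin.rev_lt_rev, and_self, hrow]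
  rw [Fin.sum_univ_eq_sum_range (fun i => i), Finset.sum_range_id, Nat.choose_two_right]

/-- The permutation of `Fin (n + 1)` that takes the value `p` at `0` and whose remaining values are
in the same relative order as those of `σ`. -/
def consPerm {n : ℕ} (p : Fin (n + 1)) (σ : Equiv.Perm (Fin n)) : Equiv.Perm (Fin (n + 1)) :=
  (Equiv.Perm.decomposeFin.symm (0, σ)).trans p.cycleRange.symm

variable {n : ℕ}

theorem consPerm_zero (p : Fin (n + 1)) (σ : Equiv.Perm (Fin n)) : consPerm p σ 0 = p := by
  simp [consPerm]

theorem consPerm_succ (p : Fin (n + 1)) (σ : Equiv.Perm (Fin n)) (i : Fin n) :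
    consPerm p σ i.succ = p.succAbove (σ i) := by
  simp [consPerm]

theorem bijective_uncurry_consPerm (n : ℕ) :
    Function.Bijective (Function.uncurry (consPerm (n := n))) := by
  rw [Fintype.bijective_iff_injective_and_card]
  refine ⟨?_, by simp [Fintype.card_perm, Nat.factorial_succ]⟩
  rintro ⟨p, σ⟩ ⟨p', σ'⟩ h
  obtain rfl : p = p' := by simpa [consPerm_zero] using DFunLike.congr_fun h 0
  have hσ : σ = σ' := Equiv.ext fun i => by simpa [consPerm_succ] using DFunLike.congr_fun h i.succ
  rw [hσ]

theorem invCount_consPerm (p : Fin (n + 1)) (σ : Equiv.Perm (Fin n)) :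
    invCount (consPerm p σ) = p + invCount σ := by
  have hfirst : (∑ b : Fin n, if (σ b).castSucc < p then 1 else 0) = (p : ℕ) := by
    rw [Equiv.sum_comp σ fun i => if i.castSucc < p then 1 else 0, ← Finset.card_filter]
    simpa [Fin.lt_def, Nat.lt_succ_iff.1 p.isLt] using Fin.card_filter_val_lt (n := n) (m := p)
  simp only [invCount_eq_sum, Fin.sum_univ_succ, consPerm_succ, consPerm_zero, Fin.not_lt_zero,
    Fin.succ_pos, Fin.succ_lt_succ_iff, Fin.succAbove_lt_iff_castSucc_lt,
    Fin.succAbove_lt_succAbove_iff, true_and, false_and, if_false, zero_add, hfirst]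

theorem sum_pow_invCount (q : ℝ) (n : ℕ) :
    ∑ σ : Equiv.Perm (Fin n), q ^ invCount σ = invPoly n q := by
  induction n with
  | zero => simp [invPoly, invCount]
  | succ n ih =>
    calc ∑ σ : Equiv.Perm (Fin (n + 1)), q ^ invCount σ
        = ∑ p : Fin (n + 1), ∑ σ : Equiv.Perm (Fin n), q ^ invCount (consPerm p σ) := by
          rw [← (bijective_uncurry_consPerm n).sum_comp fun σ => q ^ invCount σ,
            Fintype.sum_prod_type]
          rfl
      _ = (∑ p : Fin (n + 1), q ^ (p : ℕ)) * invPoly n q := by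
          simp only [invCount_consPerm, pow_add, ← Finset.mul_sum, ih, ← Finset.sum_mul]
      _ = invPoly (n + 1) q := by
          rw [Fin.sum_univ_eq_sum_range (fun i => q ^ i), mul_comm]
          exact (Finset.prod_range_succ _ n).symm

end Inversions

section RelativeOrder

variable {n k : ℕ} {σ : Equiv.Perm (Fin n)} {τ ρ : Equiv.Perm (Fin k)} {e : Fin k ↪o Fin n}

/-- The relative order of the values of `σ` at the positions `e 0 < e 1 < ⋯`. -/
def patternAt (σ : Equiv.Perm (Fin n)) (e : Fin k ↪o Fin n) : Equiv.Perm (Fin k) :=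
  (Tuple.sort (σ ∘ e))⁻¹

theorem occursAt_iff_patternAt_eq : OccursAt τ σ e ↔ patternAt σ e = τ := by
  have hinj : Function.Injective (σ ∘ e) := σ.injective.comp e.injective
  have hsort : StrictMono ((σ ∘ e) ∘ Tuple.sort (σ ∘ e)) :=
    (Tuple.monotone_sort (σ ∘ e)).strictMono_of_injective (hinj.comp (Equiv.injective _))
  constructor
  · rintro ⟨-, hτ⟩
    have hmono : StrictMono ((σ ∘ e) ∘ ⇑τ⁻¹) := fun x y hxy => (hτ _ _).2 (by simpa using hxy)
    have heq := Tuple.unique_monotone hsort.monotone hmono.monotone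
    rw [patternAt, inv_eq_iff_eq_inv]
    exact Equiv.ext fun x => hinj (congrFun heq x)
  · rintro rfl
    refine ⟨e.strictMono, fun x y => ?_⟩
    simpa [patternAt] using hsort.lt_iff_lt (a := patternAt σ e x) (b := patternAt σ e y)

/-- The permutation of `Fin n` acting as `ρ` on the positions `e 0 < e 1 < ⋯` and fixing all
others. Multiplying by it on the right rearranges the entries of a permutation at these
positions. -/
def permutePositions (e : Fin k ↪o Fin n) : Equiv.Perm (Fin k) →* Equiv.Perm (Fin n) :=
  Equiv.Perm.viaEmbeddingHom e.toEmbedding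

theorem permutePositions_apply (e : Fin k ↪o Fin n) (ρ : Equiv.Perm (Fin k)) (x : Fin k) :
    permutePositions e ρ (e x) = e (ρ x) :=
  Equiv.Perm.viaEmbedding_apply ρ e.toEmbedding x

theorem permutePositions_apply_of_notMem (ρ : Equiv.Perm (Fin k)) {a : Fin n}
    (ha : a ∉ Set.range e) : permutePositions e ρ a = a :=
  Equiv.Perm.viaEmbedding_apply_of_notMem ρ e.toEmbedding a ha

theorem occursAt_mul_permutePositions :
    OccursAt τ (σ * permutePositions e τ) e ↔ OccursAt 1 σ e := by
  simp only [OccursAt, Equiv.Perm.mul_apply, permutePositions_apply, Equiv.Perm.one_apply]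
  refine and_congr_right fun _ => ⟨fun h x y => ?_, fun h x y => h _ _⟩
  simpa using h (τ⁻¹ x) (τ⁻¹ y)

theorem lt_of_lt_of_ordConnected {α : Type*} [LinearOrder α] {s : Set α} (hs : s.OrdConnected)
    {x y z : α} (hx : x ∈ s) (hy : y ∈ s) (hz : z ∉ s) (h : x < z) : y < z :=
  lt_of_not_ge fun hzy => hz (hs.out hx hy ⟨h.le, hzy⟩)

theorem gt_of_gt_of_ordConnected {α : Type*} [LinearOrder α] {s : Set α} (hs : s.OrdConnected)
    {x y z : α} (hx : x ∈ s) (hy : y ∈ s) (hz : z ∉ s) (h : z < x) : z < y :=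
  lt_of_not_ge fun hyz => hz (hs.out hy hx ⟨hyz, h.le⟩)

theorem permutePositions_lt_iff (he : (Set.range e).OrdConnected) (ρ : Equiv.Perm (Fin k))
    {a b : Fin n} (hab : ¬(a ∈ Set.range e ∧ b ∈ Set.range e)) :
    permutePositions e ρ a < permutePositions e ρ b ↔ a < b := by
  have hmem (x : Fin k) : e x ∈ Set.range e := Set.mem_range_self x
  by_cases ha : a ∈ Set.range e
  · have hb : b ∉ Set.range e := fun hb => hab ⟨ha, hb⟩
    obtain ⟨x, rfl⟩ := ha
    rw [permutePositions_apply, permutePositions_apply_of_notMem ρ hb]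
    exact ⟨lt_of_lt_of_ordConnected he (hmem _) (hmem _) hb,
      lt_of_lt_of_ordConnected he (hmem _) (hmem _) hb⟩
  · rw [permutePositions_apply_of_notMem ρ ha]
    by_cases hb : b ∈ Set.range e
    · obtain ⟨y, rfl⟩ := hb
      rw [permutePositions_apply]
      exact ⟨gt_of_gt_of_ordConnected he (hmem _) (hmem _) ha,
        gt_of_gt_of_ordConnected he (hmem _) (hmem _) ha⟩
    · rw [permutePositions_apply_of_notMem ρ hb]

/-- The set of inversions of `σ`, as pairs of positions `a < b`. -/
def inversions (σ : Equiv.Perm (Fin n)) : Finset (Fin n × Fin n) :=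
  Finset.univ.filter fun p => p.1 < p.2 ∧ σ p.2 < σ p.1

theorem mem_inversions {a b : Fin n} : (a, b) ∈ inversions σ ↔ a < b ∧ σ b < σ a := by
  simp [inversions]

theorem filter_inversions_mul_inside (hσ : OccursAt 1 σ e) (ρ : Equiv.Perm (Fin k)) :
    (inversions (σ * permutePositions e ρ)).filter
        (fun p => p.1 ∈ Set.range e ∧ p.2 ∈ Set.range e) =
      (inversions ρ).map (e.toEmbedding.prodMap e.toEmbedding) := by
  have hinv (x y : Fin k) : (e x, e y) ∈ inversions (σ * permutePositions e ρ) ↔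
      (x, y) ∈ inversions ρ := by
    simp only [mem_inversions, Equiv.Perm.mul_apply, permutePositions_apply, hσ.2, e.lt_iff_lt,
      Equiv.Perm.one_apply]
  ext ⟨a, b⟩
  simp only [Finset.mem_filter, Finset.mem_map, Prod.exists, Function.Embedding.coe_prodMap,
    Prod.map_apply, Prod.mk.injEq]
  constructor
  · rintro ⟨hmem, ⟨x, rfl⟩, y, rfl⟩
    exact ⟨x, y, (hinv x y).1 hmem, rfl, rfl⟩
  · rintro ⟨x, y, hmem, rfl, rfl⟩
    exact ⟨(hinv x y).2 hmem, ⟨x, rfl⟩, y, rfl⟩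

theorem filter_inversions_mul_outside (he : (Set.range e).OrdConnected) (hσ : OccursAt 1 σ e)
    (ρ : Equiv.Perm (Fin k)) :
    (inversions (σ * permutePositions e ρ)).filter
        (fun p => ¬(p.1 ∈ Set.range e ∧ p.2 ∈ Set.range e)) =
      (inversions σ).map ((permutePositions e ρ).prodCongr
        (permutePositions e ρ)).symm.toEmbedding := by
  ext ⟨a, b⟩
  simp only [Finset.mem_filter, Finset.mem_map_equiv, Equiv.symm_symm, Equiv.prodCongr_apply,
    Prod.map_apply, mem_inversions, Equiv.Perm.mul_apply]
  constructor
  · rintro ⟨⟨hlt, hinv⟩, hout⟩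
    exact ⟨(permutePositions_lt_iff he ρ hout).2 hlt, hinv⟩
  · rintro ⟨hlt, hinv⟩
    have hout : ¬(a ∈ Set.range e ∧ b ∈ Set.range e) := by
      rintro ⟨⟨x, rfl⟩, y, rfl⟩
      simp only [permutePositions_apply, hσ.2, e.lt_iff_lt, Equiv.Perm.one_apply] at hlt hinv
      exact hlt.asymm hinv
    exact ⟨⟨(permutePositions_lt_iff he ρ hout).1 hlt, hinv⟩, hout⟩

theorem invCount_mul_permutePositions (he : (Set.range e).OrdConnected) (hσ : OccursAt 1 σ e)
    (ρ : Equiv.Perm (Fin k)) :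
    invCount (σ * permutePositions e ρ) = invCount σ + invCount ρ := by
  have hsplit := Finset.card_filter_add_card_filter_not
    (s := inversions (σ * permutePositions e ρ)) fun p => p.1 ∈ Set.range e ∧ p.2 ∈ Set.range e
  rw [filter_inversions_mul_inside hσ, filter_inversions_mul_outside he hσ, Finset.card_map,
    Finset.card_map] at hsplit
  exact hsplit.symm.trans (add_comm _ _)

end RelativeOrder

section MallowsMeasure

instance (n : ℕ) : MeasurableSpace (Equiv.Perm (Fin n)) := ⊤

instance (n : ℕ) : DiscreteMeasurableSpace (Equiv.Perm (Fin n)) := ⟨fun _ => trivial⟩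

/-- The Mallows(`q`) distribution on the permutations of `Fin n`, as a measure. -/
def mallowsMeasure (q : ℝ) (n : ℕ) : Measure (Equiv.Perm (Fin n)) :=
  ∑ σ, ENNReal.ofReal (q ^ invCount σ / invPoly n q) • Measure.dirac σ

variable {q : ℝ} {n k : ℕ}

theorem mallowsMeasure_apply (hq : 0 < q) (E : Set (Equiv.Perm (Fin n))) :
    mallowsMeasure q n E = ENNReal.ofReal (mallowsProb q E) := by
  have hweight (σ : Equiv.Perm (Fin n)) : 0 ≤ q ^ invCount σ / invPoly n q :=
    div_nonneg (pow_nonneg hq.le _) (invPoly_pos hq n).le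
  rw [mallowsProb, Finset.sum_div, ENNReal.ofReal_sum_of_nonneg fun σ _ => hweight σ]
  simp [mallowsMeasure, Finset.sum_filter, Set.indicator_apply]

theorem mallowsProb_nonneg (hq : 0 < q) (E : Set (Equiv.Perm (Fin n))) : 0 ≤ mallowsProb q E :=
  div_nonneg (Finset.sum_nonneg fun _ _ => pow_nonneg hq.le _) (invPoly_pos hq n).le

theorem mallowsMeasure_real (hq : 0 < q) (E : Set (Equiv.Perm (Fin n))) :
    (mallowsMeasure q n).real E = mallowsProb q E := by
  rw [measureReal_def, mallowsMeasure_apply hq, ENNReal.toReal_ofReal (mallowsProb_nonneg hq E)]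

theorem mallowsProb_univ (hq : 0 < q) :
    mallowsProb q (Set.univ : Set (Equiv.Perm (Fin n))) = 1 := by
  simp [mallowsProb, sum_pow_invCount, (invPoly_pos hq n).ne']

theorem isProbabilityMeasure_mallowsMeasure (hq : 0 < q) (n : ℕ) :
    IsProbabilityMeasure (mallowsMeasure q n) :=
  ⟨by rw [mallowsMeasure_apply hq, mallowsProb_univ hq, ENNReal.ofReal_one]⟩

theorem mallowsProb_mono (hq : 0 < q) {E F : Set (Equiv.Perm (Fin n))} (hEF : E ⊆ F) :
    mallowsProb q E ≤ mallowsProb q F := by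
  have := isProbabilityMeasure_mallowsMeasure hq n
  rw [← mallowsMeasure_real hq, ← mallowsMeasure_real hq]
  exact measureReal_mono hEF

theorem integral_mallowsMeasure (hq : 0 < q) (X : Equiv.Perm (Fin n) → ℝ) :
    ∫ σ, X σ ∂mallowsMeasure q n = mallowsExp q X := by
  have := isProbabilityMeasure_mallowsMeasure hq n
  rw [integral_fintype .of_finite, mallowsExp, Finset.sum_div]
  refine Finset.sum_congr rfl fun σ _ => ?_
  rw [mallowsMeasure_real hq, smul_eq_mul]
  simp [mallowsProb, mul_comm, mul_div_assoc, Finset.filter_eq']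

variable {e : Fin k ↪o Fin n} {T : Set (Equiv.Perm (Fin n))}

theorem mallowsProb_occursAt_inter_eq_pow_mul (q : ℝ) (he : (Set.range e).OrdConnected)
    (hT : ∀ σ ρ, σ * permutePositions e ρ ∈ T ↔ σ ∈ T) (τ : Equiv.Perm (Fin k)) :
    mallowsProb q ({σ | OccursAt τ σ e} ∩ T) =
      q ^ invCount τ * mallowsProb q ({σ | OccursAt 1 σ e} ∩ T) := by
  rw [mallowsProb, mallowsProb, mul_div_assoc', Finset.mul_sum]
  congr 1
  refine (Finset.sum_equiv (Equiv.mulRight (permutePositions e τ)) (fun σ => ?_)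
    fun σ hσ => ?_).symm
  · simp [hT, occursAt_mul_permutePositions]
  · obtain ⟨hocc, -⟩ : OccursAt 1 σ e ∧ σ ∈ T := by simpa using hσ
    rw [Equiv.coe_mulRight, invCount_mul_permutePositions he hocc, pow_add, mul_comm]

theorem sum_mallowsProb_occursAt_inter (q : ℝ) (e : Fin k ↪o Fin n)
    (T : Set (Equiv.Perm (Fin n))) :
    ∑ τ, mallowsProb q ({σ | OccursAt τ σ e} ∩ T) = mallowsProb q T := by
  simp only [mallowsProb, ← Finset.sum_div]
  rw [← Finset.sum_fiberwise (Finset.univ.filter (· ∈ T)) fun σ => patternAt σ e]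
  simp only [Finset.filter_filter, Set.mem_inter_iff, Set.mem_ofPred_eq, occursAt_iff_patternAt_eq,
    and_comm]

theorem mallowsProb_occursAt_inter (hq : 0 < q) (he : (Set.range e).OrdConnected)
    (hT : ∀ σ ρ, σ * permutePositions e ρ ∈ T ↔ σ ∈ T) (τ : Equiv.Perm (Fin k)) :
    mallowsProb q ({σ | OccursAt τ σ e} ∩ T) = q ^ invCount τ / invPoly k q * mallowsProb q T := by
  have hk := (invPoly_pos hq k).ne'
  have htotal : invPoly k q * mallowsProb q ({σ | OccursAt 1 σ e} ∩ T) = mallowsProb q T := by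
    rw [← sum_mallowsProb_occursAt_inter q e T, ← sum_pow_invCount, Finset.sum_mul]
    exact Finset.sum_congr rfl fun τ _ =>
      (mallowsProb_occursAt_inter_eq_pow_mul q he hT τ).symm
  rw [mallowsProb_occursAt_inter_eq_pow_mul q he hT, ← htotal]
  field_simp

theorem mallowsProb_occursAt (hq : 0 < q) (he : (Set.range e).OrdConnected)
    (τ : Equiv.Perm (Fin k)) :
    mallowsProb q {σ | OccursAt τ σ e} = q ^ invCount τ / invPoly k q := by
  simpa [mallowsProb_univ hq] using
    mallowsProb_occursAt_inter hq he (T := Set.univ) (fun _ _ => Iff.rfl) τ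

theorem indepSet_occursAt (hq : 0 < q) (he : (Set.range e).OrdConnected)
    (hT : ∀ σ ρ, σ * permutePositions e ρ ∈ T ↔ σ ∈ T) (τ : Equiv.Perm (Fin k)) :
    IndepSet {σ | OccursAt τ σ e} T (mallowsMeasure q n) := by
  have := isProbabilityMeasure_mallowsMeasure hq n
  refine (ProbabilityTheory.indepSet_iff_measure_inter_eq_mul .of_discrete .of_discrete _).2 ?_
  rw [mallowsMeasure_apply hq, mallowsMeasure_apply hq, mallowsMeasure_apply hq,
    mallowsProb_occursAt_inter hq he hT, ← mallowsProb_occursAt hq he τ,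
    ENNReal.ofReal_mul (mallowsProb_nonneg hq _)]

end MallowsMeasure

section ConsecutivePatterns

variable {q : ℝ} {n m i : ℕ} {τ : Equiv.Perm (Fin m)}

/-- The embedding of `Fin m` onto the block of positions `i, …, i + m - 1`. -/
def blockEmb (h : i + m ≤ n) : Fin m ↪o Fin n :=
  (Fin.natAddOrderEmb i).trans (Fin.castLEOrderEmb h)

theorem range_blockEmb (h : i + m ≤ n) :
    Set.range (blockEmb h) = Fin.val ⁻¹' Set.Ico i (i + m) := by
  ext a
  constructor
  · rintro ⟨x, rfl⟩
    exact ⟨Nat.le_add_right i x, Nat.add_lt_add_left x.isLt i⟩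
  · rintro ⟨hia, ham⟩
    exact ⟨⟨a - i, by omega⟩, Fin.ext (Nat.add_sub_cancel' hia)⟩

theorem ordConnected_range_blockEmb (h : i + m ≤ n) : (Set.range (blockEmb h)).OrdConnected := by
  rw [range_blockEmb]
  exact Set.ordConnected_Ico.preimage_mono Fin.val_strictMono.monotone

theorem occursConsec_iff_occursAt (h : i + m ≤ n) {σ : Equiv.Perm (Fin n)} :
    OccursConsec τ σ i ↔ OccursAt τ σ (blockEmb h) :=
  ⟨fun ⟨_, hσ⟩ => ⟨(blockEmb h).strictMono, hσ⟩, fun ⟨_, hσ⟩ => ⟨h, hσ⟩⟩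

theorem mallowsProb_occursConsec (hq : 0 < q) (h : i + m ≤ n) (τ : Equiv.Perm (Fin m)) :
    mallowsProb q {σ : Equiv.Perm (Fin n) | OccursConsec τ σ i} =
      q ^ invCount τ / invPoly m q := by
  simp_rw [occursConsec_iff_occursAt h]
  exact mallowsProb_occursAt hq (ordConnected_range_blockEmb h) τ

theorem occursConsec_congr {j : ℕ} {σ σ' : Equiv.Perm (Fin n)}
    (h : Set.EqOn σ σ' (Fin.val ⁻¹' Set.Ico j (j + m))) :
    OccursConsec τ σ j ↔ OccursConsec τ σ' j := by
  refine exists_congr fun hj => forall₂_congr fun x y => ?_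
  rw [h ⟨Nat.le_add_right j x, Nat.add_lt_add_left x.isLt j⟩,
    h ⟨Nat.le_add_right j y, Nat.add_lt_add_left y.isLt j⟩]

theorem occursConsec_mul_permutePositions (h : i + m ≤ n) {j : ℕ}
    (hij : j + m ≤ i ∨ i + m ≤ j) (σ : Equiv.Perm (Fin n)) (ρ : Equiv.Perm (Fin m)) :
    OccursConsec τ (σ * permutePositions (blockEmb h) ρ) j ↔ OccursConsec τ σ j := by
  refine occursConsec_congr fun a ⟨hja, haj⟩ => ?_
  have ha : a ∉ Set.range (blockEmb h) := by
    rw [range_blockEmb]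
    rintro ⟨hia, hai⟩
    omega
  rw [Equiv.Perm.mul_apply, permutePositions_apply_of_notMem ρ ha]

theorem indepSet_occursConsec_eventCount (hq : 0 < q) (h : i + m ≤ n) (τ : Equiv.Perm (Fin m))
    {J : Finset ℕ} (hJ : ∀ j ∈ J, j + m ≤ i ∨ i + m ≤ j) (k : ℕ) :
    IndepSet {σ : Equiv.Perm (Fin n) | OccursConsec τ σ i}
      (eventCount (fun j => {σ | OccursConsec τ σ j}) J ⁻¹' {k}) (mallowsMeasure q n) := by
  have hcount (σ : Equiv.Perm (Fin n)) (ρ : Equiv.Perm (Fin m)) :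
      eventCount (fun j => {σ : Equiv.Perm (Fin n) | OccursConsec τ σ j}) J
          (σ * permutePositions (blockEmb h) ρ) =
        eventCount (fun j => {σ | OccursConsec τ σ j}) J σ := by
    simp only [eventCount_eq_card_filter, Set.mem_ofPred_eq]
    congr 1
    exact Finset.filter_congr fun j hj => occursConsec_mul_permutePositions h (hJ j hj) σ ρ
  simp_rw [occursConsec_iff_occursAt h]
  refine indepSet_occursAt hq (ordConnected_range_blockEmb h) (fun σ ρ => ?_) τ
  rw [Set.mem_preimage, Set.mem_preimage, hcount]

end ConsecutivePatterns

section DecreasingBlocks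

variable {q : ℝ} {n m i d : ℕ} {σ : Equiv.Perm (Fin n)}

theorem occursConsec_revPerm_iff_strictAntiOn (h : i + m ≤ n) :
    OccursConsec (Fin.revPerm : Equiv.Perm (Fin m)) σ i ↔
      StrictAntiOn σ (Fin.val ⁻¹' Set.Ico i (i + m)) := by
  rw [occursConsec_iff_occursAt h, ← range_blockEmb h]
  constructor
  · rintro ⟨-, hσ⟩ _ ⟨x, rfl⟩ _ ⟨y, rfl⟩ hxy
    exact (hσ y x).2 (by simpa using hxy)
  · intro hσ
    refine ⟨(blockEmb h).strictMono, fun x y => ?_⟩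
    rw [hσ.lt_iff_gt ⟨x, rfl⟩ ⟨y, rfl⟩, (blockEmb h).lt_iff_lt, Fin.revPerm_apply,
      Fin.revPerm_apply, Fin.rev_lt_rev]

theorem occursConsec_revPerm_add (hd : d < m)
    (h₁ : OccursConsec (Fin.revPerm : Equiv.Perm (Fin m)) σ i)
    (h₂ : OccursConsec (Fin.revPerm : Equiv.Perm (Fin m)) σ (i + d)) :
    OccursConsec (Fin.revPerm : Equiv.Perm (Fin (m + d))) σ i := by
  have hn := h₂.1
  rw [occursConsec_revPerm_iff_strictAntiOn (by omega)] at h₁ h₂ ⊢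
  let c : Fin n := ⟨i + d, by omega⟩
  have hleft : StrictAntiOn σ (Fin.val ⁻¹' Set.Ico i (i + m) ∩ Set.Iic c) :=
    h₁.mono Set.inter_subset_left
  refine (hleft.union h₂ ⟨⟨⟨Nat.le_add_right i d, Nat.add_lt_add_left hd i⟩, Set.mem_Iic.2 le_rfl⟩,
    fun a ha => ha.2⟩ ⟨⟨le_rfl, Nat.lt_add_of_pos_right (by omega)⟩, fun a ha => ha.1⟩).mono ?_
  rintro a ⟨hia, ham⟩
  rcases le_or_gt a c with hac | hac
  · exact .inl ⟨⟨hia, lt_of_le_of_lt hac (Nat.add_lt_add_left hd i)⟩, hac⟩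
  · exact .inr ⟨hac.le, by omega⟩

theorem mallowsProb_occursConsec_revPerm (hq : 0 < q) (h : i + m ≤ n) :
    mallowsProb q {σ : Equiv.Perm (Fin n) | OccursConsec (Fin.revPerm : Equiv.Perm (Fin m)) σ i} =
      q ^ m.choose 2 / invPoly m q := by
  rw [mallowsProb_occursConsec hq h, invCount_revPerm]

theorem mallowsProb_occursConsec_revPerm_inter_le (hq : 0 < q) (hd : d < m) (h : i + d + m ≤ n) :
    mallowsProb q ({σ : Equiv.Perm (Fin n) | OccursConsec (Fin.revPerm : Equiv.Perm (Fin m)) σ i} ∩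
      {σ | OccursConsec (Fin.revPerm : Equiv.Perm (Fin m)) σ (i + d)}) ≤
      q ^ (m + d).choose 2 / invPoly (m + d) q := by
  rw [← mallowsProb_occursConsec_revPerm (i := i) (n := n) hq (by omega)]
  exact mallowsProb_mono hq fun σ ⟨h₁, h₂⟩ => occursConsec_revPerm_add hd h₁ h₂

end DecreasingBlocks

section OverlappingBlocks

variable {m N i j : ℕ}

/-- The starting points `j ≤ N` of the blocks of length `m` that meet the block
`i, …, i + m - 1`. -/
def overlapping (m N i : ℕ) : Finset ℕ :=
  (Finset.range (N + 1)).filter fun j => i < j + m ∧ j < i + m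

theorem mem_overlapping : j ∈ overlapping m N i ↔ j < N + 1 ∧ i < j + m ∧ j < i + m := by
  rw [overlapping, Finset.mem_filter, Finset.mem_range]

theorem card_overlapping_le (m N i : ℕ) : (overlapping m N i).card ≤ 2 * m - 1 := by
  have hsub : overlapping m N i ⊆ Finset.Ico (i + 1 - m) (i + m) := fun j hj => by
    rw [mem_overlapping] at hj
    exact Finset.mem_Ico.2 ⟨by omega, hj.2.2⟩
  have hcard := Finset.card_le_card hsub
  rw [Nat.card_Ico] at hcard
  omega

theorem sum_sum_overlapping_const_le (hm : 0 < m) (N : ℕ) {c : ℝ} (hc : 0 ≤ c) :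
    ∑ i ∈ Finset.range (N + 1), ∑ _j ∈ overlapping m N i, c ≤ (N + 1) * (2 * m - 1) * c := by
  have hrow (i : ℕ) : ((overlapping m N i).card : ℝ) ≤ 2 * m - 1 := by
    rw [le_sub_iff_add_le]
    exact_mod_cast (by have := card_overlapping_le m N i; omega :
      (overlapping m N i).card + 1 ≤ 2 * m)
  calc ∑ i ∈ Finset.range (N + 1), ∑ _j ∈ overlapping m N i, c
      = ∑ i ∈ Finset.range (N + 1), ((overlapping m N i).card : ℝ) * c := by
        simp only [Finset.sum_const, nsmul_eq_mul]
    _ ≤ ∑ _i ∈ Finset.range (N + 1), (2 * m - 1) * c := by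
        gcongr with i
        exact hrow i
    _ = (N + 1) * (2 * m - 1) * c := by
        rw [Finset.sum_const, Finset.card_range, nsmul_eq_mul, Nat.cast_succ, mul_assoc]

variable {F : ℕ → ℕ → ℝ} {Q : ℕ → ℝ}

theorem sum_sum_overlapping_erase (hF : ∀ i j, F i j = F j i) (m N : ℕ) :
    ∑ i ∈ Finset.range (N + 1), ∑ j ∈ (overlapping m N i).erase i, F i j =
      2 * ∑ i ∈ Finset.range (N + 1), ∑ j ∈ Finset.Ico (i + 1) (min (i + m) (N + 1)), F i j := by
  have hrow (i : ℕ) : (overlapping m N i).erase i = Finset.Ico (i + 1) (min (i + m) (N + 1)) ∪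
      (Finset.range (N + 1)).filter fun j => j < i ∧ i < j + m := by
    ext j
    simp only [Finset.mem_erase, mem_overlapping, Finset.mem_union, Finset.mem_Ico,
      Finset.mem_filter, Finset.mem_range]
    omega
  have hdisj (i : ℕ) : Disjoint (Finset.Ico (i + 1) (min (i + m) (N + 1)))
      ((Finset.range (N + 1)).filter fun j => j < i ∧ i < j + m) :=
    Finset.disjoint_left.2 fun j hj hj' =>
      absurd (Finset.mem_filter.1 hj').2.1 (Nat.lt_of_succ_le (Finset.mem_Ico.1 hj).1).not_gt
  have hswap : ∑ i ∈ Finset.range (N + 1),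
        ∑ j ∈ (Finset.range (N + 1)).filter (fun j => j < i ∧ i < j + m), F i j =
      ∑ i ∈ Finset.range (N + 1), ∑ j ∈ Finset.Ico (i + 1) (min (i + m) (N + 1)), F i j := by
    refine (Finset.sum_comm' fun i j => ?_).trans
      (Finset.sum_congr rfl fun i _ => Finset.sum_congr rfl fun j _ => hF j i)
    simp only [Finset.mem_filter, Finset.mem_range, Finset.mem_Ico]
    omega
  simp_rw [hrow, fun i => Finset.sum_union (hdisj i), Finset.sum_add_distrib]
  rw [hswap, two_mul]

theorem sum_Ico_min_le (hQ : ∀ d, 0 ≤ Q d)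
    (hFQ : ∀ d, 0 < d → d < m → i + d ≤ N → F i (i + d) ≤ Q d) :
    ∑ j ∈ Finset.Ico (i + 1) (min (i + m) (N + 1)), F i j ≤ ∑ d ∈ Finset.Ico 1 m, Q d := by
  calc ∑ j ∈ Finset.Ico (i + 1) (min (i + m) (N + 1)), F i j
      ≤ ∑ j ∈ Finset.Ico (i + 1) (min (i + m) (N + 1)), Q (j - i) := by
        refine Finset.sum_le_sum fun j hj => ?_
        obtain ⟨hij, hjm⟩ := Finset.mem_Ico.1 hj
        simpa [Nat.add_sub_cancel' (by omega : i ≤ j)] using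
          hFQ (j - i) (by omega) (by omega) (by omega)
    _ ≤ ∑ j ∈ Finset.Ico (i + 1) (i + m), Q (j - i) :=
        Finset.sum_le_sum_of_subset_of_nonneg (Finset.Ico_subset_Ico_right (min_le_left _ _))
          fun j _ _ => hQ _
    _ = ∑ d ∈ Finset.Ico 1 m, Q d := by
        rw [add_comm i 1, add_comm i m, ← Finset.sum_Ico_add (fun j => Q (j - i)) 1 m i]
        simp only [Nat.add_sub_cancel_left]

/- The last row of the sum over pairs `i < j` is empty, whence the factor `N` and not `N + 1`. -/
theorem sum_sum_overlapping_erase_le (hF : ∀ i j, F i j = F j i) (hQ : ∀ d, 0 ≤ Q d)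
    (hFQ : ∀ i d, 0 < d → d < m → i + d ≤ N → F i (i + d) ≤ Q d) :
    ∑ i ∈ Finset.range (N + 1), ∑ j ∈ (overlapping m N i).erase i, F i j ≤
      2 * N * ∑ d ∈ Finset.Ico 1 m, Q d := by
  have hlast : Finset.Ico (N + 1) (min (N + m) (N + 1)) = ∅ :=
    Finset.Ico_eq_empty_of_le (min_le_right _ _)
  rw [sum_sum_overlapping_erase hF, Finset.sum_range_succ, hlast, Finset.sum_empty, add_zero,
    mul_assoc]
  gcongr
  calc ∑ i ∈ Finset.range N, ∑ j ∈ Finset.Ico (i + 1) (min (i + m) (N + 1)), F i j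
      ≤ ∑ _i ∈ Finset.range N, ∑ d ∈ Finset.Ico 1 m, Q d :=
        Finset.sum_le_sum fun i _ => sum_Ico_min_le hQ (hFQ i)
    _ = N * ∑ d ∈ Finset.Ico 1 m, Q d := by
        rw [Finset.sum_const, Finset.card_range, nsmul_eq_mul]

end OverlappingBlocks

section PoissonApproximation

variable {q : ℝ} {n m : ℕ}

/-- The number of occurrences of `τ` in a permutation of `Fin n` at consecutive positions. -/
def consecCount (n : ℕ) (τ : Equiv.Perm (Fin m)) : Equiv.Perm (Fin n) → ℕ :=
  eventCount (fun i => {σ | OccursConsec τ σ i}) (Finset.range (n - m + 1))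

theorem mallowsMeasure_real_occursConsec (hq : 0 < q) (hmn : m ≤ n) (τ : Equiv.Perm (Fin m))
    {i : ℕ} (hi : i ∈ Finset.range (n - m + 1)) :
    (mallowsMeasure q n).real {σ | OccursConsec τ σ i} = q ^ invCount τ / invPoly m q := by
  rw [mallowsMeasure_real hq,
    mallowsProb_occursConsec hq (by have := Finset.mem_range.1 hi; omega)]

theorem mallowsExp_consecCount (hq : 0 < q) (τ : Equiv.Perm (Fin m)) :
    mallowsExp q (fun σ => (consecCount n τ σ : ℝ)) =
      ∑ i ∈ Finset.range (n - m + 1), (mallowsMeasure q n).real {σ | OccursConsec τ σ i} := by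
  have := isProbabilityMeasure_mallowsMeasure hq n
  rw [← integral_mallowsMeasure hq]
  exact integral_eventCount (fun _ => .of_discrete) _

theorem mallowsExp_consecCount_pos (hq : 0 < q) (hmn : m ≤ n) (τ : Equiv.Perm (Fin m)) :
    0 < mallowsExp q (fun σ => (consecCount n τ σ : ℝ)) := by
  rw [mallowsExp_consecCount hq]
  refine Finset.sum_pos (fun i hi => ?_) ⟨0, Finset.mem_range.2 (Nat.succ_pos _)⟩
  rw [mallowsMeasure_real_occursConsec hq hmn τ hi]
  exact div_pos (pow_pos hq _) (invPoly_pos hq m)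

theorem dTVNatMallows_consecCount_le_magicFactor_mul (hq : 0 < q) (hm : 0 < m) (hmn : m ≤ n)
    (τ : Equiv.Perm (Fin m)) :
    dTVNatMallows q (consecCount n τ) (mallowsExp q fun σ => (consecCount n τ σ : ℝ)) ≤
      magicFactor (mallowsExp q fun σ => (consecCount n τ σ : ℝ)) *
        (∑ i ∈ Finset.range (n - m + 1), ∑ _j ∈ overlapping m (n - m) i,
            (q ^ invCount τ / invPoly m q) ^ 2 +
          ∑ i ∈ Finset.range (n - m + 1), ∑ j ∈ (overlapping m (n - m) i).erase i,
            mallowsProb q ({σ : Equiv.Perm (Fin n) | OccursConsec τ σ i} ∩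
              {σ | OccursConsec τ σ j})) := by
  have := isProbabilityMeasure_mallowsMeasure hq n
  have hsub (i : ℕ) : overlapping m (n - m) i ⊆ Finset.range (n - m + 1) :=
    Finset.filter_subset _ _
  have hprob (i : ℕ) (hi : i ∈ Finset.range (n - m + 1)) :=
    mallowsMeasure_real_occursConsec hq hmn τ hi
  have hchen := chenStein_local_dependence (μ := mallowsMeasure q n)
    (A := fun i => {σ | OccursConsec τ σ i}) (fun _ => .of_discrete)
    (B := overlapping m (n - m)) (fun i _ => hsub i)
    (fun i hi => mem_overlapping.2 ⟨Finset.mem_range.1 hi, by omega, by omega⟩)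
    (fun i hi => indepSet_occursConsec_eventCount hq (by rw [Finset.mem_range] at hi; omega) τ
      fun j hj => by
        rw [Finset.mem_sdiff, Finset.mem_range, mem_overlapping] at hj
        omega)
    (mallowsExp_consecCount_pos hq hmn τ) (mallowsExp_consecCount hq τ)
  rw [Finset.sum_congr rfl fun i hi => Finset.sum_congr rfl fun j hj => by
    rw [hprob i hi, hprob j (hsub i hj), ← sq]] at hchen
  simp_rw [mallowsMeasure_real hq] at hchen
  exact hchen

theorem dTVNatMallows_consecCount_le (hq : 0 < q) (hm : 0 < m) (hmn : m ≤ n)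
    (τ : Equiv.Perm (Fin m)) {Q : ℕ → ℝ} (hQ : ∀ d, 0 ≤ Q d)
    (hoverlap : ∀ i d, 0 < d → d < m → i + d + m ≤ n →
      mallowsProb q ({σ : Equiv.Perm (Fin n) | OccursConsec τ σ i} ∩
        {σ | OccursConsec τ σ (i + d)}) ≤ Q d) :
    dTVNatMallows q (consecCount n τ) (mallowsExp q fun σ => (consecCount n τ σ : ℝ)) ≤
      magicFactor (mallowsExp q fun σ => (consecCount n τ σ : ℝ)) *
        ((n - m + 1) * (2 * m - 1) * (q ^ invCount τ / invPoly m q) ^ 2 +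
          2 * (n - m) * ∑ d ∈ Finset.Ico 1 m, Q d) := by
  refine (dTVNatMallows_consecCount_le_magicFactor_mul hq hm hmn τ).trans ?_
  have hmagic := magicFactor_nonneg (mallowsExp_consecCount_pos hq hmn τ)
  rw [← Nat.cast_sub hmn]
  gcongr
  · exact sum_sum_overlapping_const_le hm _ (sq_nonneg _)
  · refine sum_sum_overlapping_erase_le (fun i j => ?_) hQ fun i d hd hdm hid =>
      hoverlap i d hd hdm (by omega)
    rw [Set.inter_comm]

theorem sum_Icc_reflect_eq_sum_Ico (f : ℕ → ℝ) (m : ℕ) :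
    ∑ s ∈ Finset.Icc 1 (m - 1), f (2 * m - s) = ∑ d ∈ Finset.Ico 1 m, f (m + d) := by
  refine Finset.sum_nbij' (m - ·) (m - ·) ?_ ?_ ?_ ?_ (fun s hs => congrArg f ?_) <;>
    simp only [Finset.mem_Icc, Finset.mem_Ico] at * <;> omega

theorem numPairs_bounds {m n : ℝ} (hm : 2 ≤ m) (hn : 2 * m ≤ n) :
    (n - m + 1) * (2 * m - 1) ≤ 2 * (2 * m * n - 3 * m ^ 2 + m) ∧
      2 * (n - m) ≤ 2 * (3 * m - 3 * m ^ 2 - 2 * n + 2 * m * n) := by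
  constructor <;> nlinarith [mul_nonneg (sub_nonneg.2 hm) (sub_nonneg.2 hn)]

theorem dTVNatMallows_consecCount_revPerm_le (hq : 0 < q) (hm : 0 < m) (hmn : m ≤ n) :
    dTVNatMallows q (consecCount n (Fin.revPerm : Equiv.Perm (Fin m)))
        (mallowsExp q fun σ => (consecCount n (Fin.revPerm : Equiv.Perm (Fin m)) σ : ℝ)) ≤
      (n - m + 1) * (2 * m - 1) * (q ^ m.choose 2 / invPoly m q) ^ 2 +
        2 * (n - m) * ∑ d ∈ Finset.Ico 1 m, q ^ (m + d).choose 2 / invPoly (m + d) q := by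
  have hQ (d : ℕ) : 0 ≤ q ^ (m + d).choose 2 / invPoly (m + d) q :=
    div_nonneg (pow_nonneg hq.le _) (invPoly_pos hq _).le
  have hbound := dTVNatMallows_consecCount_le hq hm hmn Fin.revPerm hQ
    fun i d _ hd h => mallowsProb_occursConsec_revPerm_inter_le hq hd h
  rw [invCount_revPerm] at hbound
  have hmR : (1 : ℝ) ≤ m := by exact_mod_cast hm
  have hmnR : (m : ℝ) ≤ n := by exact_mod_cast hmn
  refine hbound.trans (mul_le_of_le_one_left (add_nonneg ?_ ?_)
    (magicFactor_le_one (mallowsExp_consecCount_pos hq hmn _)))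
  · exact mul_nonneg (mul_nonneg (by linarith) (by linarith)) (sq_nonneg _)
  · exact mul_nonneg (by linarith) (Finset.sum_nonneg fun d _ => hQ d)

end PoissonApproximation

/-- Proposition: Poisson approximation for the number of decreasing blocks of `m`
consecutive positions of a Mallows(q) permutation of `[n]`. -/
theorem stmt17 (q : ℝ) (hq : 0 < q) (n m : ℕ) (hm : 2 ≤ m) (hn : 2 * m ≤ n)
    (W : Equiv.Perm (Fin n) → ℕ)
    (hW : ∀ σ, W σ = ((Finset.range (n - m + 1)).filter fun i =>
        OccursConsec (Fin.revPerm : Equiv.Perm (Fin m)) σ i).card)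
    (EW b1 b2 : ℝ)
    (hEW : EW = mallowsExp q fun σ => (W σ : ℝ))
    (hb1 : b1 = (2 * (m : ℝ) * (n : ℝ) - 3 * (m : ℝ) ^ 2 + (m : ℝ))
        * q ^ (2 * m.choose 2) / (invPoly m q) ^ 2)
    (hb2 : b2 = (3 * (m : ℝ) - 3 * (m : ℝ) ^ 2 - 2 * (n : ℝ) + 2 * (m : ℝ) * (n : ℝ))
        * ∑ s ∈ Finset.Icc 1 (m - 1), q ^ ((2 * m - s).choose 2) / invPoly (2 * m - s) q) :
    dTVNatMallows q W EW ≤ 2 * (b1 + b2) := by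
  obtain rfl : W = consecCount n Fin.revPerm := by
    funext σ
    rw [hW, consecCount, eventCount_eq_card_filter]
    rfl
  obtain ⟨hpairs, hoverlaps⟩ := numPairs_bounds (m := m) (n := n) (by exact_mod_cast hm)
    (by exact_mod_cast hn)
  have hQ (d : ℕ) : 0 ≤ q ^ (m + d).choose 2 / invPoly (m + d) q :=
    div_nonneg (pow_nonneg hq.le _) (invPoly_pos hq _).le
  rw [sum_Icc_reflect_eq_sum_Ico (fun k => q ^ k.choose 2 / invPoly k q)] at hb2
  rw [mul_div_assoc, mul_comm 2 (m.choose 2), pow_mul, ← div_pow] at hb1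
  rw [hEW, hb1, hb2, mul_add, ← mul_assoc, ← mul_assoc]
  refine (dTVNatMallows_consecCount_revPerm_le hq (by omega) (by omega)).trans ?_
  gcongr
  exact Finset.sum_nonneg fun d _ => hQ d

end
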